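/- For every solution of the reduced backward Ricci flow system of class U3S1, case (ii), the quantity C²A/(C+A) is conserved, C(t)²A(t)/(C(t)+A(t)) = λ₃²λ₁/(λ₃+λ₁) =: Λ for all t ∈ [0,T), and A(t)/2 − (√Λ/4)·arsinh(2A(t)/√Λ) = λ₁/2 − (√Λ/4)·arsinh(2λ₁/√Λ) − t for all t ∈ [0,T). -/

import Mathlib

open Real Set ENNReal

/-- The time domain `[0, T)` where `T ∈ (0, ∞]` is an extended nonnegative real. -/
def flowDomain (T : ℝ≥0∞) : Set ℝ := {t : ℝ | 0 ≤ t ∧ ENNReal.ofReal t < T}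

theorem flowDomain_convex (T : ℝ≥0∞) : Convex ℝ (flowDomain T) := by
  apply Set.OrdConnected.convex
  refine ⟨fun x hx y hy z hz => ⟨hx.1.trans hz.1, ?_⟩⟩
  exact lt_of_le_of_lt (ENNReal.ofReal_le_ofReal hz.2) hy.2

theorem flow_const (T : ℝ≥0∞) (hT : 0 < T) (f : ℝ → ℝ)
    (hf : ∀ t ∈ flowDomain T, HasDerivWithinAt f 0 (flowDomain T) t) :
    ∀ t ∈ flowDomain T, f t = f 0 := by
  intro t ht
  have h0 : (0 : ℝ) ∈ flowDomain T := ⟨le_rfl, by simpa using hT⟩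
  have h := (flowDomain_convex T).norm_image_sub_le_of_norm_hasDerivWithin_le
    (f := f) (f' := fun _ => 0) (C := 0) hf (by simp) h0 ht
  rw [zero_mul] at h
  exact sub_eq_zero.mp (norm_le_zero_iff.mp h)

/-- For every solution of the reduced backward Ricci flow system of class `U3S1`,
case (ii), the quantity `C²A/(C+A)` is conserved, equal to `Λ = λ₃²λ₁/(λ₃+λ₁)`, and
`A/2 − (√Λ/4)·arsinh(2A/√Λ) = λ₁/2 − (√Λ/4)·arsinh(2λ₁/√Λ) − t` on `[0,T)`. -/
theorem stmt15 (T : ℝ≥0∞) (hT : 0 < T)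
    (lam1 lam3 : ℝ) (hlam1 : 0 < lam1) (hlam3 : 0 < lam3)
    (A C : ℝ → ℝ)
    (hpos : ∀ t ∈ flowDomain T, 0 < A t ∧ 0 < C t)
    (hA : ∀ t ∈ flowDomain T,
      HasDerivWithinAt A (-(C t / A t) - 2) (flowDomain T) t)
    (hC : ∀ t ∈ flowDomain T,
      HasDerivWithinAt C (C t ^ 2 / A t ^ 2) (flowDomain T) t)
    (hA0 : A 0 = lam1) (hC0 : C 0 = lam3) :
    ∀ t ∈ flowDomain T,
      C t ^ 2 * A t / (C t + A t) = lam3 ^ 2 * lam1 / (lam3 + lam1) ∧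
      A t / 2 - Real.sqrt (lam3 ^ 2 * lam1 / (lam3 + lam1)) / 4 *
          Real.arsinh (2 * A t / Real.sqrt (lam3 ^ 2 * lam1 / (lam3 + lam1))) =
        lam1 / 2 - Real.sqrt (lam3 ^ 2 * lam1 / (lam3 + lam1)) / 4 *
          Real.arsinh (2 * lam1 / Real.sqrt (lam3 ^ 2 * lam1 / (lam3 + lam1))) - t := by
  have hQ := flow_const T hT (fun t => C t ^ 2 * A t / (C t + A t)) (by
    intro t ht
    obtain ⟨ha, hc⟩ := hpos t ht
    have hne : C t + A t ≠ 0 := by positivity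
    have h := (((hC t ht).pow 2).mul (hA t ht)).div ((hC t ht).add (hA t ht)) hne
    refine h.congr_deriv ?_
    simp only [Pi.mul_apply, Pi.pow_apply, Pi.add_apply]
    field_simp
    push_cast
    ring)
  simp only [hA0, hC0] at hQ
  set L := lam3 ^ 2 * lam1 / (lam3 + lam1) with hL
  have hLpos : 0 < L := by positivity
  have hs : 0 < √L := Real.sqrt_pos.mpr hLpos
  have hs2 : √L ^ 2 = L := Real.sq_sqrt hLpos.le
  have hR := flow_const T hT
    (fun t => A t / 2 - √L / 4 * Real.arsinh (2 * A t / √L) + t) (by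
    intro t ht
    obtain ⟨ha, hc⟩ := hpos t ht
    have h1 : HasDerivWithinAt (fun t => 2 * A t / √L)
        (2 * (-(C t / A t) - 2) / √L) (flowDomain T) t :=
      ((hA t ht).const_mul 2).div_const _
    have h2 := (((hA t ht).div_const 2).sub (h1.arsinh.const_mul (√L / 4))).add
      (hasDerivWithinAt_id t _)
    refine h2.congr_deriv ?_
    have hsq : √(1 + (2 * A t / √L) ^ 2) = (C t + 2 * A t) / C t := by
      rw [show 1 + (2 * A t / √L) ^ 2 = ((C t + 2 * A t) / C t) ^ 2 by
        rw [div_pow, hs2, ← hQ t ht]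
        field_simp
        ring]
      exact Real.sqrt_sq (by positivity)
    rw [hsq]
    simp only [smul_eq_mul]
    field_simp
    ring)
  intro t ht
  refine ⟨hQ t ht, ?_⟩
  have h := hR t ht
  simp only [hA0] at h
  linarith
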